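/- For all integers m ≥ 0 and l ∈ ℤ, one has S_{m+1,l}(q) = q^{−m−l−1} S_{m,l+1}(q) + S_{m,l}(q) + q^{−m+l−1} S̃_{m,l−1}(q), an identity in ℤ[q, q⁻¹]. -/

import Mathlib

/-!
Put `k = m + 1 - l - ν`, and shift `ν` to `ν - 1` in `S_{m,l+1}` and `S_{m,l}`. Up to a common power
of `q`, the recursion then holds term by term in `ν`, as the Pascal rule
`C(n,ν) C(ν,k) = C(n-1,ν-1) C(ν-1,k-1) + q^(k+n-ν) C(n-1,ν-1) C(ν-1,k) + q^k C(n-1,ν) C(ν,k)`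
for `q`-trinomial coefficients, taken at `n = m + 1`. To obtain this rule, expand `C(n,ν)` by
Pascal's rule, and then `C(ν,k)` in the summand with `C(n-1,ν-1)`. What remains is the identity
`(1 - q^k) C(n-1,ν) C(ν,k) = (1 - q^(n-ν)) C(n-1,ν-1) C(ν-1,k-1)`, both sides of which equal
`(1 - q^ν) C(n-1,ν) C(ν-1,k-1)`.
-/

open LaurentPolynomial

/-- The Gaussian (q-)binomial coefficient `C(n,k)_q` as a Laurent polynomial in `q`,
defined by the q-Pascal recursion `C(n+1,k+1)_q = C(n,k)_q + q^(k+1) C(n,k+1)_q`. -/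
noncomputable def qbinom : ℕ → ℕ → LaurentPolynomial ℤ
  | _, 0 => 1
  | 0, _ + 1 => 0
  | n + 1, k + 1 => qbinom n k + T ((k : ℤ) + 1) * qbinom n (k + 1)

/-- `C(n,k)_q` for integer arguments, zero unless `0 ≤ k ≤ n`. -/
noncomputable def qbinomZ (n k : ℤ) : LaurentPolynomial ℤ :=
  if 0 ≤ k ∧ k ≤ n then qbinom n.toNat k.toNat else 0

/-- `S_{m,l}(q) = Σ_{ν∈ℤ} q^{(ν+l−m)(ν+l)+ν(ν−m)} C(m,ν)_q C(ν, m−l−ν)_q`. -/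
noncomputable def Sq (m : ℕ) (l : ℤ) : LaurentPolynomial ℤ :=
  ∑ᶠ ν : ℤ,
    T ((ν + l - m) * (ν + l) + ν * (ν - m)) * (qbinomZ m ν * qbinomZ ν (m - l - ν))

/-- `S̃_{m,l}(q) = Σ_{ν∈ℤ} q^{(ν+l−m)(ν+l−1)+ν(ν−m)} C(m,ν)_q C(ν, m−l−ν)_q`. -/
noncomputable def Sqt (m : ℕ) (l : ℤ) : LaurentPolynomial ℤ :=
  ∑ᶠ ν : ℤ,
    T ((ν + l - m) * (ν + l - 1) + ν * (ν - m)) * (qbinomZ m ν * qbinomZ ν (m - l - ν))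

lemma qbinom_zero_right (n : ℕ) : qbinom n 0 = 1 := by
  cases n <;> rw [qbinom]

lemma qbinom_succ_succ (n k : ℕ) :
    qbinom (n + 1) (k + 1) = qbinom n k + T ((k : ℤ) + 1) * qbinom n (k + 1) := by
  rw [qbinom]

lemma qbinom_eq_zero_of_lt {n k : ℕ} (h : n < k) : qbinom n k = 0 := by
  induction n generalizing k with
  | zero =>
    obtain ⟨j, rfl⟩ := Nat.exists_eq_add_of_lt h
    rw [qbinom]
  | succ n ih =>
    obtain ⟨j, rfl⟩ := Nat.exists_eq_succ_of_ne_zero (Nat.ne_zero_of_lt h)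
    rw [qbinom_succ_succ, ih (by lia), ih (by lia), mul_zero, add_zero]

lemma qbinomZ_natCast (n k : ℕ) : qbinomZ n k = qbinom n k := by
  unfold qbinomZ
  split_ifs with h
  · simp only [Int.toNat_natCast]
  · exact (qbinom_eq_zero_of_lt (by lia)).symm

lemma qbinomZ_eq_zero {n k : ℤ} (h : ¬(0 ≤ k ∧ k ≤ n)) : qbinomZ n k = 0 :=
  if_neg h

lemma qbinomZ_zero_right {n : ℤ} (hn : 0 ≤ n) : qbinomZ n 0 = 1 := by
  lift n to ℕ using hn
  exact_mod_cast (qbinomZ_natCast n 0).trans (qbinom_zero_right n)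

lemma one_sub_T_mul_qbinomZ_zero_left (c k : ℤ) : (1 - T (c * k)) * qbinomZ 0 k = 0 := by
  obtain rfl | hk := eq_or_ne k 0
  · rw [mul_zero, T_zero, sub_self, zero_mul]
  · rw [qbinomZ_eq_zero (by lia), mul_zero]

lemma qbinomZ_eq_pred_add {n : ℤ} (hn : n ≠ 0) (k : ℤ) :
    qbinomZ n k = qbinomZ (n - 1) (k - 1) + T k * qbinomZ (n - 1) k := by
  by_cases h : 0 ≤ k ∧ k ≤ n
  · obtain rfl | hk := eq_or_ne k 0
    · rw [qbinomZ_zero_right h.2, qbinomZ_zero_right (by lia), qbinomZ_eq_zero (by lia), T_zero,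
        mul_one, zero_add]
    · lift n to ℕ using h.1.trans h.2
      lift k to ℕ using h.1
      obtain ⟨n, rfl⟩ := Nat.exists_eq_succ_of_ne_zero (Int.natCast_ne_zero.mp hn)
      obtain ⟨k, rfl⟩ := Nat.exists_eq_succ_of_ne_zero (Int.natCast_ne_zero.mp hk)
      have pascal := qbinom_succ_succ n k
      simp only [← qbinomZ_natCast] at pascal
      simpa using pascal
  · rw [qbinomZ_eq_zero h, qbinomZ_eq_zero (by lia), qbinomZ_eq_zero (by lia), mul_zero, add_zero]

lemma one_sub_T_mul_qbinomZ_eq_pred_right (n k : ℤ) :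
    (1 - T k) * qbinomZ n k = (1 - T (n + 1 - k)) * qbinomZ n (k - 1) := by
  obtain hn | hn := lt_or_ge n 0
  · rw [qbinomZ_eq_zero (by lia), qbinomZ_eq_zero (by lia), mul_zero, mul_zero]
  induction n, hn using Int.leInduction generalizing k with
  | base =>
    have left_zero := one_sub_T_mul_qbinomZ_zero_left 1 k
    have right_zero := one_sub_T_mul_qbinomZ_zero_left (-1) (k - 1)
    rw [one_mul] at left_zero
    rw [neg_one_mul, neg_sub] at right_zero
    rw [zero_add, left_zero, right_zero]
  | succ n hn ih =>
    have pascal (j : ℤ) :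
        qbinomZ (n + 1) j = qbinomZ n (j - 1) + T j * qbinomZ n j := by
      simpa using qbinomZ_eq_pred_add (by lia : n + 1 ≠ 0) j
    have left_eq : (1 - T k) * qbinomZ (n + 1) k = (1 - T (n + 1)) * qbinomZ n (k - 1) := by
      have hT : (T k * T (n + 1 - k) : ℤ[T;T⁻¹]) = T (n + 1) := by rw [← T_add]; congr 1; ring
      linear_combination (1 - T k) * pascal k + T k * ih k - qbinomZ n (k - 1) * hT
    have right_eq : (1 - T (n + 1 + 1 - k)) * qbinomZ (n + 1) (k - 1) =
        (1 - T (n + 1)) * qbinomZ n (k - 1) := by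
      have hT : (T (k - 1) * T (n + 1 + 1 - k) : ℤ[T;T⁻¹]) = T (n + 1) := by
        rw [← T_add]; congr 1; ring
      have ih' := ih (k - 1)
      rw [show n + 1 - (k - 1) = n + 1 + 1 - k by ring] at ih'
      linear_combination (1 - T (n + 1 + 1 - k)) * pascal (k - 1) - ih' - qbinomZ n (k - 1) * hT
    rw [left_eq, right_eq]

lemma qbinomZ_eq_T_mul_pred_add {n : ℤ} (hn : n ≠ 0) (k : ℤ) :
    qbinomZ n k = T (n - k) * qbinomZ (n - 1) (k - 1) + qbinomZ (n - 1) k := by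
  have ratio := one_sub_T_mul_qbinomZ_eq_pred_right (n - 1) k
  rw [sub_add_cancel] at ratio
  linear_combination qbinomZ_eq_pred_add hn k - ratio

lemma one_sub_T_mul_qbinomZ_eq_pred_pred (n k : ℤ) :
    (1 - T k) * qbinomZ n k = (1 - T n) * qbinomZ (n - 1) (k - 1) := by
  obtain rfl | hn := eq_or_ne n 0
  · rw [T_zero, sub_self, zero_mul]
    simpa only [one_mul] using one_sub_T_mul_qbinomZ_zero_left 1 k
  · have hT : (T k * T (n - k) : ℤ[T;T⁻¹]) = T n := by rw [← T_add, add_sub_cancel]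
    linear_combination qbinomZ_eq_pred_add hn k - T k * qbinomZ_eq_T_mul_pred_add hn k
      - qbinomZ (n - 1) (k - 1) * hT

/-- The `q`-trinomial coefficient `C(n,ν)_q C(ν,k)_q`, with parts `k`, `ν - k` and `n - ν`. It is
the coefficient occurring in the sums `Sq` and `Sqt`. -/
noncomputable def qtrinom (n ν k : ℤ) : ℤ[T;T⁻¹] :=
  qbinomZ n ν * qbinomZ ν k

lemma qtrinom_eq_pred_add {n : ℤ} (hn : n ≠ 0) (ν k : ℤ) :
    qtrinom n ν k =
      qtrinom (n - 1) (ν - 1) (k - 1) + T (k + (n - ν)) * qtrinom (n - 1) (ν - 1) k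
        + T k * qtrinom (n - 1) ν k := by
  unfold qtrinom
  have outer := qbinomZ_eq_T_mul_pred_add hn ν
  have inner : qbinomZ (n - 1) (ν - 1) * qbinomZ ν k =
      qbinomZ (n - 1) (ν - 1) * (qbinomZ (ν - 1) (k - 1) + T k * qbinomZ (ν - 1) k) := by
    obtain rfl | hν := eq_or_ne ν 0
    · rw [qbinomZ_eq_zero (n := n - 1) (by lia), zero_mul, zero_mul]
    · rw [qbinomZ_eq_pred_add hν]
  have exchange : (1 - T k) * (qbinomZ (n - 1) ν * qbinomZ ν k) =
      (1 - T (n - ν)) * (qbinomZ (n - 1) (ν - 1) * qbinomZ (ν - 1) (k - 1)) := by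
    have ratio := one_sub_T_mul_qbinomZ_eq_pred_right (n - 1) ν
    rw [sub_add_cancel] at ratio
    linear_combination qbinomZ (n - 1) ν * one_sub_T_mul_qbinomZ_eq_pred_pred ν k
      + qbinomZ (ν - 1) (k - 1) * ratio
  rw [T_add]
  linear_combination qbinomZ ν k * outer + T (n - ν) * inner + exchange

lemma hasFiniteSupport_qtrinom (n : ℤ) (k : ℤ → ℤ) :
    (fun ν ↦ qtrinom n ν (k ν)).HasFiniteSupport := by
  refine (Set.finite_Icc 0 n).subset fun ν hν ↦ ?_
  contrapose! hν
  rw [Function.notMem_support, qtrinom, qbinomZ_eq_zero hν, zero_mul]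

lemma hasFiniteSupport_qtrinom_pred (n : ℤ) (k : ℤ → ℤ) :
    (fun ν ↦ qtrinom n (ν - 1) (k ν)).HasFiniteSupport := by
  simpa using (hasFiniteSupport_qtrinom n fun ν ↦ k (ν + 1)).fun_comp_of_injective
    (sub_left_injective (b := (1 : ℤ)))

/-- The exponent of `q` in the `ν`-th term of `S_{m,l}`. -/
def sqExponent (m l ν : ℤ) : ℤ :=
  (ν + l - m) * (ν + l) + ν * (ν - m)

lemma Sq_eq_finsum (m : ℕ) (l : ℤ) :
    Sq m l = ∑ᶠ ν : ℤ, T (sqExponent m l ν) * qtrinom m ν (m - l - ν) :=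
  rfl

lemma Sq_eq_finsum_pred (m : ℕ) (l : ℤ) :
    Sq m l = ∑ᶠ ν : ℤ, T (sqExponent (m + 1) l ν) *
      (T (m + 1 - l - ν + (m + 1 - ν)) * qtrinom m (ν - 1) (m + 1 - l - ν)) := by
  rw [Sq_eq_finsum, ← finsum_comp_equiv (Equiv.subRight (1 : ℤ))]
  refine finsum_congr fun ν ↦ ?_
  rw [Equiv.subRight_apply, ← mul_assoc, ← T_add, sqExponent, sqExponent]
  congr 2 <;> ring

lemma T_mul_Sq_add_one_eq_finsum_pred (m : ℕ) (l : ℤ) :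
    T (-(m : ℤ) - l - 1) * Sq m (l + 1) = ∑ᶠ ν : ℤ, T (sqExponent (m + 1) l ν) *
      qtrinom m (ν - 1) (m + 1 - l - ν - 1) := by
  rw [Sq_eq_finsum, mul_finsum, ← finsum_comp_equiv (Equiv.subRight (1 : ℤ))]
  refine finsum_congr fun ν ↦ ?_
  rw [Equiv.subRight_apply, ← mul_assoc, ← T_add, sqExponent, sqExponent]
  congr 2 <;> ring

lemma T_mul_Sqt_sub_one_eq_finsum (m : ℕ) (l : ℤ) :
    T (-(m : ℤ) + l - 1) * Sqt m (l - 1) = ∑ᶠ ν : ℤ, T (sqExponent (m + 1) l ν) *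
      (T (m + 1 - l - ν) * qtrinom m ν (m + 1 - l - ν)) := by
  rw [Sqt, mul_finsum]
  refine finsum_congr fun ν ↦ ?_
  rw [← qtrinom, ← mul_assoc, ← mul_assoc, ← T_add, ← T_add, sqExponent]
  congr 2 <;> ring

/-- S_{m+1,l} = q^{-m-l-1} S_{m,l+1} + S_{m,l} + q^{-m+l-1} St_{m,l-1}. -/
theorem S_succ_rec1 (m : ℕ) (l : ℤ) :
    Sq (m + 1) l =
      T (-(m : ℤ) - l - 1) * Sq m (l + 1) + Sq m l + T (-(m : ℤ) + l - 1) * Sqt m (l - 1) := by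
  have pascal (ν : ℤ) := qtrinom_eq_pred_add (by lia : (m + 1 : ℤ) ≠ 0) ν (m + 1 - l - ν)
  simp only [add_sub_cancel_right] at pascal
  have fin₁ := hasFiniteSupport_qtrinom_pred m fun ν ↦ m + 1 - l - ν - 1
  have fin₂ := hasFiniteSupport_qtrinom_pred m fun ν ↦ m + 1 - l - ν
  have fin₃ := hasFiniteSupport_qtrinom m fun ν ↦ m + 1 - l - ν
  rw [T_mul_Sq_add_one_eq_finsum_pred, Sq_eq_finsum_pred m, T_mul_Sqt_sub_one_eq_finsum,
    Sq_eq_finsum]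
  push_cast
  simp only [pascal, mul_add]
  rw [finsum_add_distrib, finsum_add_distrib]
  · exact fin₁.fun_mul_right _
  · exact (fin₂.fun_mul_right _).fun_mul_right _
  · exact (fin₁.fun_mul_right _).fun_add ((fin₂.fun_mul_right _).fun_mul_right _)
  · exact (fin₃.fun_mul_right _).fun_mul_right _
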